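/- For every α > 0 there exists a constant c = c(α) such that for all a, b ∈ ℝ^N (N ∈ ℕ) the two-sided inequality (1/c)·|b^⟦α⟧ − a^⟦α⟧| ≤ (|a| + |b|)^{α−1}·|b − a| ≤ c·|b^⟦α⟧ − a^⟦α⟧| holds. -/

import Mathlib

/-!
Let `‖a‖ ≤ ‖b‖`. Since `‖b‖ ≤ ‖a‖ + ‖b‖ ≤ 2 ‖b‖`, the weight `(‖a‖ + ‖b‖) ^ (α - 1)` may be
replaced by `‖b‖ ^ (α - 1)`. The difference between `b^⟦α⟧ - a^⟦α⟧` and `‖b‖ ^ (α - 1) • (b - a)`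
is a multiple of `a`, and its norm is `|p - q|`, where `p = ‖b‖ ^ α - ‖a‖ ^ α` and
`q = ‖b‖ ^ (α - 1) * (‖b‖ - ‖a‖)`. By Bernoulli's inequality each of `p` and `q` is at most
`K = max α α⁻¹` times the other, so `|p - q|` is at most `K - 1` times either of them. By the
reverse triangle inequality, `p` and `q` are in turn bounded by the norms of the two vectors being
compared.
-/

noncomputable section

/-- The signed power `v^⟦α⟧ = |v|^{α-1} v` of a vector (interpreted as `0` for `v = 0`). -/
def vpow {N : ℕ} (α : ℝ) (v : EuclideanSpace ℝ (Fin N)) : EuclideanSpace ℝ (Fin N) :=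
  ‖v‖ ^ (α - 1) • v

lemma one_le_max_self_inv {R : Type*} [Field R] [LinearOrder R] [IsStrictOrderedRing R] {α : R}
    (hα : 0 < α) : 1 ≤ max α α⁻¹ :=
  le_max_iff.2 <| (le_total 1 α).imp_right fun h => (one_le_inv₀ hα).2 h

lemma abs_sub_le_sub_one_mul {R : Type*} [CommRing R] [LinearOrder R] [IsStrictOrderedRing R]
    {K p q : R} (hK : 1 ≤ K) (hpq : p ≤ K * q) (hqp : q ≤ K * p) :
    |p - q| ≤ (K - 1) * q := by
  rcases le_total q p with h | h
  · rw [abs_of_nonneg (sub_nonneg.2 h)]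
    linarith
  · have : (K - 1) * p ≤ (K - 1) * q := mul_le_mul_of_nonneg_left h (sub_nonneg.2 hK)
    rw [abs_of_nonpos (sub_nonpos.2 h)]
    linarith

lemma rpow_le_rpow_abs_mul_rpow (β : ℝ) {C x y : ℝ} (hx : 0 ≤ x) (hy : 0 ≤ y)
    (hxy : x ≤ C * y) (hyx : y ≤ C * x) : x ^ β ≤ C ^ |β| * y ^ β := by
  rcases hy.eq_or_lt with rfl | hy
  · obtain rfl : x = 0 := le_antisymm (by simpa using hxy) hx
    rcases eq_or_ne β 0 with rfl | hβ
    · simp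
    · simp [Real.zero_rpow hβ]
  have hx : 0 < x := hx.lt_of_ne (by rintro rfl; linarith)
  have hC : 0 < C := pos_of_mul_pos_left (hx.trans_le hxy) hy.le
  rcases le_total 0 β with hβ | hβ
  · rw [abs_of_nonneg hβ, ← Real.mul_rpow hC.le hy.le]
    exact Real.rpow_le_rpow hx.le hxy hβ
  · have h : C ^ β * x ^ β ≤ y ^ β := by
      rw [← Real.mul_rpow hC.le hx.le]
      exact Real.rpow_le_rpow_of_nonpos hy hyx hβ
    rwa [abs_of_nonpos hβ, Real.rpow_neg hC.le, le_inv_mul_iff₀ (Real.rpow_pos_of_pos hC β)]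

lemma one_sub_rpow_le_max_mul {α r : ℝ} (hα : 0 < α) (hr : 0 ≤ r) (hr1 : r ≤ 1) :
    1 - r ^ α ≤ max α α⁻¹ * (1 - r) := by
  have hr' : 0 ≤ 1 - r := sub_nonneg.2 hr1
  rcases le_total α 1 with h | h
  · have hpow : r ≤ r ^ α := Real.self_le_rpow_of_le_one hr hr1 h
    calc 1 - r ^ α ≤ 1 * (1 - r) := by linarith
      _ ≤ max α α⁻¹ * (1 - r) := mul_le_mul_of_nonneg_right (one_le_max_self_inv hα) hr'
  · have bernoulli := one_add_mul_self_le_rpow_one_add (s := r - 1) (by linarith) h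
    rw [add_sub_cancel] at bernoulli
    calc 1 - r ^ α ≤ α * (1 - r) := by linarith
      _ ≤ max α α⁻¹ * (1 - r) := mul_le_mul_of_nonneg_right (le_max_left _ _) hr'

lemma one_sub_le_max_mul_one_sub_rpow {α r : ℝ} (hα : 0 < α) (hr : 0 ≤ r) (hr1 : r ≤ 1) :
    1 - r ≤ max α α⁻¹ * (1 - r ^ α) := by
  have h := one_sub_rpow_le_max_mul (inv_pos.2 hα) (Real.rpow_nonneg hr α)
    (Real.rpow_le_one hr hr1 hα.le)
  rwa [Real.rpow_rpow_inv hr hα.ne', inv_inv, max_comm] at h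

section RpowSub

variable {α s t : ℝ}

lemma rpow_sub_one_mul_self (hα : α ≠ 0) (ht : 0 ≤ t) : t ^ (α - 1) * t = t ^ α := by
  rw [← Real.rpow_add_one' ht (by simpa using hα), sub_add_cancel]

lemma rpow_mul_one_sub_div_rpow (hs : 0 ≤ s) (ht : 0 < t) :
    t ^ α * (1 - (s / t) ^ α) = t ^ α - s ^ α := by
  rw [Real.div_rpow hs ht.le, mul_sub, mul_one, mul_div_cancel₀ _ (Real.rpow_pos_of_pos ht α).ne']

lemma rpow_mul_one_sub_div (ht : t ≠ 0) :
    t ^ α * (1 - s / t) = t ^ (α - 1) * (t - s) := by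
  rw [Real.rpow_sub_one ht]
  field_simp

lemma rpow_sub_rpow_le_max_mul (hα : 0 < α) (hs : 0 ≤ s) (hst : s ≤ t) :
    t ^ α - s ^ α ≤ max α α⁻¹ * (t ^ (α - 1) * (t - s)) := by
  rcases (hs.trans hst).eq_or_lt with rfl | ht
  · simp [le_antisymm hst hs]
  rw [← rpow_mul_one_sub_div_rpow hs ht, ← rpow_mul_one_sub_div ht.ne', mul_left_comm]
  gcongr
  exact one_sub_rpow_le_max_mul hα (by positivity) ((div_le_one ht).2 hst)

lemma rpow_sub_one_mul_sub_le_max_mul (hα : 0 < α) (hs : 0 ≤ s) (hst : s ≤ t) :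
    t ^ (α - 1) * (t - s) ≤ max α α⁻¹ * (t ^ α - s ^ α) := by
  rcases (hs.trans hst).eq_or_lt with rfl | ht
  · simp [le_antisymm hst hs]
  rw [← rpow_mul_one_sub_div_rpow hs ht, ← rpow_mul_one_sub_div ht.ne', mul_left_comm]
  gcongr
  exact one_sub_le_max_mul_one_sub_rpow hα (by positivity) ((div_le_one ht).2 hst)

end RpowSub

/-- The signed power `v^⟦α⟧` in a real seminormed space; it is `vpow` on `EuclideanSpace ℝ (Fin N)`.
It vanishes at `v = 0` whatever value `Real.rpow` gives to `0 ^ (α - 1)`. -/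
def signedPow {E : Type*} [SeminormedAddCommGroup E] [NormedSpace ℝ E] (α : ℝ) (v : E) : E :=
  ‖v‖ ^ (α - 1) • v

section SignedPow

variable {E : Type*} [SeminormedAddCommGroup E] [NormedSpace ℝ E] {α : ℝ} {a b : E}

lemma norm_rpow_smul (β : ℝ) (v w : E) : ‖‖v‖ ^ β • w‖ = ‖v‖ ^ β * ‖w‖ :=
  norm_smul_of_nonneg (by positivity) w

lemma norm_signedPow (hα : α ≠ 0) (v : E) : ‖signedPow α v‖ = ‖v‖ ^ α := by
  rw [signedPow, norm_rpow_smul, rpow_sub_one_mul_self hα (norm_nonneg v)]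

lemma norm_signedPow_sub_sub_smul (hα : α ≠ 0) (a b : E) :
    ‖signedPow α b - signedPow α a - ‖b‖ ^ (α - 1) • (b - a)‖ =
      |‖b‖ ^ α - ‖a‖ ^ α - ‖b‖ ^ (α - 1) * (‖b‖ - ‖a‖)| := by
  have hvec : signedPow α b - signedPow α a - ‖b‖ ^ (α - 1) • (b - a) =
      (‖b‖ ^ (α - 1) - ‖a‖ ^ (α - 1)) • a := by
    simp only [signedPow]
    module
  have hscal : ‖b‖ ^ α - ‖a‖ ^ α - ‖b‖ ^ (α - 1) * (‖b‖ - ‖a‖) =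
      (‖b‖ ^ (α - 1) - ‖a‖ ^ (α - 1)) * ‖a‖ := by
    rw [← rpow_sub_one_mul_self hα (norm_nonneg a), ← rpow_sub_one_mul_self hα (norm_nonneg b)]
    ring
  rw [hvec, hscal, norm_smul, abs_mul, abs_norm, Real.norm_eq_abs]

lemma norm_signedPow_sub_le_max_mul (hα : 0 < α) (hab : ‖a‖ ≤ ‖b‖) :
    ‖signedPow α b - signedPow α a‖ ≤ max α α⁻¹ * (‖b‖ ^ (α - 1) * ‖b - a‖) := by
  have hK := one_le_max_self_inv hα
  have herr : ‖signedPow α b - signedPow α a - ‖b‖ ^ (α - 1) • (b - a)‖ ≤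
      (max α α⁻¹ - 1) * (‖b‖ ^ (α - 1) * ‖b - a‖) := by
    rw [norm_signedPow_sub_sub_smul hα.ne']
    calc _ ≤ (max α α⁻¹ - 1) * (‖b‖ ^ (α - 1) * (‖b‖ - ‖a‖)) :=
          abs_sub_le_sub_one_mul hK (rpow_sub_rpow_le_max_mul hα (norm_nonneg a) hab)
            (rpow_sub_one_mul_sub_le_max_mul hα (norm_nonneg a) hab)
      _ ≤ _ := by
          gcongr
          exact norm_sub_norm_le b a
  have htri := norm_le_norm_add_norm_sub' (signedPow α b - signedPow α a)
    (‖b‖ ^ (α - 1) • (b - a))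
  rw [norm_rpow_smul] at htri
  linarith

lemma norm_rpow_mul_norm_sub_le_max_mul (hα : 0 < α) (hab : ‖a‖ ≤ ‖b‖) :
    ‖b‖ ^ (α - 1) * ‖b - a‖ ≤ max α α⁻¹ * ‖signedPow α b - signedPow α a‖ := by
  have hK := one_le_max_self_inv hα
  have herr : ‖signedPow α b - signedPow α a - ‖b‖ ^ (α - 1) • (b - a)‖ ≤
      (max α α⁻¹ - 1) * ‖signedPow α b - signedPow α a‖ := by
    rw [norm_signedPow_sub_sub_smul hα.ne', abs_sub_comm]
    calc _ ≤ (max α α⁻¹ - 1) * (‖b‖ ^ α - ‖a‖ ^ α) :=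
          abs_sub_le_sub_one_mul hK (rpow_sub_one_mul_sub_le_max_mul hα (norm_nonneg a) hab)
            (rpow_sub_rpow_le_max_mul hα (norm_nonneg a) hab)
      _ = (max α α⁻¹ - 1) * (‖signedPow α b‖ - ‖signedPow α a‖) := by
          rw [norm_signedPow hα.ne', norm_signedPow hα.ne']
      _ ≤ _ := by
          gcongr
          exact norm_sub_norm_le _ _
  have htri := norm_le_norm_add_norm_sub (signedPow α b - signedPow α a)
    (‖b‖ ^ (α - 1) • (b - a))
  rw [norm_rpow_smul] at htri
  linarith

end SignedPow

theorem vpow_two_sided_estimate_general (α : ℝ) (hα : 0 < α) :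
    ∃ c : ℝ, 0 < c ∧ ∀ (E : Type*) [SeminormedAddCommGroup E] [NormedSpace ℝ E] (a b : E),
      (1 / c) * ‖signedPow α b - signedPow α a‖ ≤ (‖a‖ + ‖b‖) ^ (α - 1) * ‖b - a‖ ∧
      (‖a‖ + ‖b‖) ^ (α - 1) * ‖b - a‖ ≤ c * ‖signedPow α b - signedPow α a‖ := by
  have hc : 0 < 2 ^ |α - 1| * max α α⁻¹ := by positivity
  refine ⟨2 ^ |α - 1| * max α α⁻¹, hc, fun E _ _ a b => ?_⟩
  wlog hab : ‖a‖ ≤ ‖b‖ generalizing a b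
  · simpa only [add_comm ‖b‖, norm_sub_rev a b, norm_sub_rev (signedPow α a)] using
      this b a (le_of_not_ge hab)
  have ha := norm_nonneg a
  have weight_le : (‖a‖ + ‖b‖) ^ (α - 1) ≤ 2 ^ |α - 1| * ‖b‖ ^ (α - 1) := by
    apply rpow_le_rpow_abs_mul_rpow <;> linarith
  have le_weight : ‖b‖ ^ (α - 1) ≤ 2 ^ |α - 1| * (‖a‖ + ‖b‖) ^ (α - 1) := by
    apply rpow_le_rpow_abs_mul_rpow <;> linarith
  rw [one_div, inv_mul_le_iff₀ hc]
  constructor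
  · calc _ ≤ max α α⁻¹ * (‖b‖ ^ (α - 1) * ‖b - a‖) := norm_signedPow_sub_le_max_mul hα hab
      _ ≤ max α α⁻¹ * (2 ^ |α - 1| * (‖a‖ + ‖b‖) ^ (α - 1) * ‖b - a‖) := by gcongr
      _ = _ := by ring
  · calc _ ≤ 2 ^ |α - 1| * ‖b‖ ^ (α - 1) * ‖b - a‖ := by gcongr
      _ ≤ 2 ^ |α - 1| * (max α α⁻¹ * ‖signedPow α b - signedPow α a‖) := by
          rw [mul_assoc]
          gcongr 2 ^ |α - 1| * ?_
          exact norm_rpow_mul_norm_sub_le_max_mul hα hab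
      _ = _ := by ring

/-- For every `α > 0` there is a constant `c = c(α)` such that for all `a, b ∈ ℝ^N` one has
`(1/c)·|b^⟦α⟧ − a^⟦α⟧| ≤ (|a| + |b|)^{α−1}·|b − a| ≤ c·|b^⟦α⟧ − a^⟦α⟧|`. -/
theorem vpow_two_sided_estimate (α : ℝ) (hα : 0 < α) :
    ∃ c : ℝ, 0 < c ∧ ∀ (N : ℕ) (a b : EuclideanSpace ℝ (Fin N)),
      (1 / c) * ‖vpow α b - vpow α a‖ ≤ (‖a‖ + ‖b‖) ^ (α - 1) * ‖b - a‖ ∧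
      (‖a‖ + ‖b‖) ^ (α - 1) * ‖b - a‖ ≤ c * ‖vpow α b - vpow α a‖ := by
  obtain ⟨c, hc, h⟩ := vpow_two_sided_estimate_general α hα
  exact ⟨c, hc, fun N => h (EuclideanSpace ℝ (Fin N))⟩

end
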